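/- arXiv:1501.02547 — 3 statements merged into one kernel-verified Lean document; each statement's English description precedes it below -/
import Mathlib

section
/- Let k be a field of characteristic 2 and let A = k[x]/(x^2). Then for every natural number n, the n-th Hochschild homology HH_n(A, A) is a k-vector space of dimension 2 (indeed HH_n(A,A) ≅ A as k-vector spaces for every n). -/
open TensorProduct MulOpposite CategoryTheory

section Machinery

variable (k : Type) [CommRing k] (S : Type) [Ring S] [Algebra k S] (P : Set (S × S))

/-- The `k`-submodule of (the restriction of scalars of) an `S`-module `N` generated by all
differences `p.1 • n - p.2 • n` for pairs `p ∈ P` and `n ∈ N`. -/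
noncomputable def relSub (N : ModuleCat S) :
    Submodule k ((ModuleCat.restrictScalars (algebraMap k S)).obj N) :=
  Submodule.span k {x | ∃ p ∈ P, ∃ n : N, x = p.1 • n - p.2 • n}

/-- The "coinvariants"-type additive functor sending an `S`-module `N` to its quotient,
as a `k`-module, by the span of all elements `p.1 • n - p.2 • n` for `p ∈ P`, `n ∈ N`. -/
noncomputable def coinvFunctor : ModuleCat S ⥤ ModuleCat k where
  obj N := ModuleCat.of k (((ModuleCat.restrictScalars (algebraMap k S)).obj N) ⧸ relSub k S P N)
  map {N N'} f := ModuleCat.ofHom <| Submodule.mapQ (relSub k S P N) (relSub k S P N')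
      ((ModuleCat.restrictScalars (algebraMap k S)).map f).hom (by
    rw [relSub, Submodule.span_le]
    rintro x ⟨p, hp, n, rfl⟩
    have : ((ModuleCat.restrictScalars (algebraMap k S)).map f).hom (p.1 • n - p.2 • n)
        = p.1 • (f n) - p.2 • (f n) := by
      show f (p.1 • n - p.2 • n) = _
      rw [map_sub, map_smul, map_smul]
    exact Submodule.subset_span ⟨p, hp, f n, this⟩)
  map_id _ := ModuleCat.hom_ext (Submodule.linearMap_qext _ (LinearMap.ext fun _ => rfl))
  map_comp _ _ := ModuleCat.hom_ext (Submodule.linearMap_qext _ (LinearMap.ext fun _ => rfl))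

instance : (coinvFunctor k S P).Additive where
  map_add := ModuleCat.hom_ext (Submodule.linearMap_qext _ (LinearMap.ext fun _ => rfl))

end Machinery

/-- Hochschild homology `HH_n(A, A)` of a `k`-algebra `A`: the `n`-th left derived functor
(that is, `Tor_n` over the enveloping algebra `A ⊗[k] Aᵐᵒᵖ`) of the coinvariants functor
`N ↦ N / span { a•n - n•a }` (which is naturally isomorphic to `A ⊗_{A ⊗[k] Aᵐᵒᵖ} -`),
evaluated at the `A`-bimodule `A` itself. -/
noncomputable def HochschildHomology (k : Type) [CommRing k] (A : Type) [Ring A] [Algebra k A]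
    (n : ℕ) : ModuleCat k :=
  letI : Module (A ⊗[k] Aᵐᵒᵖ) A := TensorProduct.Algebra.module
  ((coinvFunctor k (A ⊗[k] Aᵐᵒᵖ)
      {p | ∃ a : A, p = (a ⊗ₜ[k] (1 : Aᵐᵒᵖ), (1 : A) ⊗ₜ[k] op a)}).leftDerived n).obj
    (ModuleCat.of (A ⊗[k] Aᵐᵒᵖ) A)

/-!
Let `A = k[x]/(f)` with `f` monic, so that `A ⊗ Aᵐᵒᵖ = A[y]/(f(y))`. Over `A` the polynomial
factors as `f(y) = (y - x) q(y)`, and the classes of `y - x` and `q` generate each other's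
annihilators. Since `A` is the quotient of `A ⊗ Aᵐᵒᵖ` by `y - x`, it has a free resolution,
periodic of period two, whose differentials are multiplication by `y - x` and by `q` alternately.
Taking coinvariants sets `y = x`: every term becomes `A`, and the differentials become `0` and
`q(x) = f'(x)`. If `f' = 0`, as for `f = x ^ 2` in characteristic `2`, all differentials vanish,
and each homology group is `A`.
-/

section PeriodicResolution

open HomologicalComplex

/-- The homology of a complex with zero differentials is its underlying graded object. -/
noncomputable def homologyIsoOfDEqZero {C ι : Type*} [Category* C] [Limits.HasZeroMorphisms C]
    {c : ComplexShape ι} (K : HomologicalComplex C c) (hK : ∀ i j, K.d i j = 0) (i : ι)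
    [K.HasHomology i] : K.homology i ≅ K.X i :=
  (ShortComplex.HomologyData.ofZeros (K.sc i) (hK _ _) (hK _ _)).left.homologyIso

variable {C : Type*} [Category* C] [Abelian C] {X M : C} {φ ψ : X ⟶ X} {ε : X ⟶ M}
  {hφψ : φ ≫ ψ = 0} {hψφ : ψ ≫ φ = 0} {hψε : ψ ≫ ε = 0}

/-- The augmentation, by `ε : X ⟶ M` in degree `0`, of the periodic complex `⋯ ⟶ X ⟶ X ⟶ X` whose
differentials `X_{i+1} ⟶ X_i` are `ψ` for `i` even and `φ` for `i` odd. -/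
noncomputable def periodicAugmentation (hφψ : φ ≫ ψ = 0) (hψφ : ψ ≫ φ = 0) (hψε : ψ ≫ ε = 0) :
    alternatingConst X hφψ hψφ (fun _ _ => ComplexShape.down_nat_odd_add) ⟶
      (ChainComplex.single₀ C).obj M :=
  (ChainComplex.toSingle₀Equiv _ M).symm ⟨ε, by simpa using! hψε⟩

lemma quasiIso_periodicAugmentation [Epi ε] (hφ : (ShortComplex.mk φ ψ hφψ).Exact)
    (hψ : (ShortComplex.mk ψ φ hψφ).Exact) (hε : (ShortComplex.mk ψ ε hψε).Exact) :
    QuasiIso (periodicAugmentation hφψ hψφ hψε) where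
  quasiIsoAt n := by
    cases n with
    | zero =>
      rw [ChainComplex.quasiIsoAt₀_iff, ShortComplex.quasiIso_iff_of_zeros' _ rfl rfl rfl]
      have hε₀ : (periodicAugmentation hφψ hψφ hψε).f 0 = ε :=
        ChainComplex.toSingle₀Equiv_symm_apply_f_zero _ _
      simp only [shortComplexFunctor'_map_τ₂, hε₀]
      exact ⟨hε, ‹Epi ε›⟩
    | succ n =>
      rw [quasiIsoAt_iff_exactAt' (hL := ChainComplex.exactAt_succ_single_obj ..),
        exactAt_iff' _ (n + 2) (n + 1) n (by simp) (by simp)]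
      rcases Nat.even_or_odd (n + 1) with hn | hn
      · exact (ShortComplex.exact_iff_of_iso
          (alternatingConstScIsoEven X hφψ hψφ _ (by simp) (by simp) hn)).2 hψ
      · exact (ShortComplex.exact_iff_of_iso
          (alternatingConstScIsoOdd X hφψ hψφ _ (by simp) (by simp) hn)).2 hφ

/-- The `2`-periodic projective resolution `⋯ ⟶ X ⟶ X ⟶ X ⟶ M`, whose maps from right to left are
`ε, ψ, φ, ψ, φ, …`. -/
noncomputable def periodicResolution [Projective X] [Epi ε] (hφ : (ShortComplex.mk φ ψ hφψ).Exact)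
    (hψ : (ShortComplex.mk ψ φ hψφ).Exact) (hε : (ShortComplex.mk ψ ε hψε).Exact) :
    ProjectiveResolution M where
  complex := alternatingConst X hφψ hψφ (fun _ _ => ComplexShape.down_nat_odd_add)
  projective _ := ‹Projective X›
  π := periodicAugmentation hφψ hψφ hψε
  quasiIso := quasiIso_periodicAugmentation hφ hψ hε

lemma periodicResolution_nonempty_leftDerived_iso [HasProjectiveResolutions C] [Projective X]
    [Epi ε] (hφ : (ShortComplex.mk φ ψ hφψ).Exact) (hψ : (ShortComplex.mk ψ φ hψφ).Exact)
    (hε : (ShortComplex.mk ψ ε hψε).Exact) {D : Type*} [Category* D] [Abelian D] (F : C ⥤ D)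
    [F.Additive] (hFφ : F.map φ = 0) (hFψ : F.map ψ = 0) (n : ℕ) :
    Nonempty ((F.leftDerived n).obj M ≅ F.obj X) := by
  let P := periodicResolution hφ hψ hε
  have hd (i j : ℕ) : ((F.mapHomologicalComplex _).obj P.complex).d i j = 0 := by
    change F.map (if _ : _ then if _ : Even i then φ else ψ else 0) = 0
    split_ifs <;> simp [hFφ, hFψ]
  exact ⟨P.isoLeftDerivedObj F n ≪≫ homologyIsoOfDEqZero _ hd n⟩

end PeriodicResolution

section IsExactPair

variable {R S : Type*} [CommRing R] [CommRing S]

/-- An exact pair of zero divisors: each of `u` and `v` generates the annihilator of the other. -/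
structure IsExactPair (u v : S) : Prop where
  mul_left_eq_zero_iff : ∀ s, u * s = 0 ↔ v ∣ s
  mul_right_eq_zero_iff : ∀ s, v * s = 0 ↔ u ∣ s

lemma map_mul_eq_zero_iff_dvd {φ : R →+* S} (hφ : Function.Surjective φ) {p q : R}
    (hker : ∀ r, φ r = 0 ↔ p * q ∣ r) (hp : p ∈ nonZeroDivisors R) (s : S) :
    φ p * s = 0 ↔ φ q ∣ s := by
  constructor
  · obtain ⟨r, rfl⟩ := hφ s
    rw [← map_mul, hker, dvd_cancel_left_mem_nonZeroDivisors hp]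
    exact map_dvd φ
  · rintro ⟨t, rfl⟩
    rw [← mul_assoc, ← map_mul, (hker _).2 dvd_rfl, zero_mul]

lemma map_dvd_map_iff {φ : R →+* S} (hφ : Function.Surjective φ) {p : R}
    (hker : ∀ r, φ r = 0 → p ∣ r) {r : R} : φ p ∣ φ r ↔ p ∣ r := by
  refine ⟨?_, map_dvd φ⟩
  rintro ⟨s, hs⟩
  obtain ⟨t, rfl⟩ := hφ s
  rw [← dvd_sub_left (dvd_mul_right p t)]
  exact hker _ (by rw [map_sub, map_mul, hs, sub_self])

lemma IsExactPair.map_of_mul {φ : R →+* S} (hφ : Function.Surjective φ) {p q : R}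
    (hker : ∀ r, φ r = 0 ↔ p * q ∣ r) (hp : p ∈ nonZeroDivisors R) (hq : q ∈ nonZeroDivisors R) :
    IsExactPair (φ p) (φ q) where
  mul_left_eq_zero_iff := map_mul_eq_zero_iff_dvd hφ hker hp
  mul_right_eq_zero_iff := map_mul_eq_zero_iff_dvd hφ (mul_comm p q ▸ hker) hq

/-- Multiplication by `u` as an endomorphism of the free module `S` of rank one. -/
noncomputable def mulHom (u : S) : ModuleCat.of S S ⟶ ModuleCat.of S S :=
  ModuleCat.ofHom (LinearMap.mulLeft S u)

lemma mulHom_comp_eq_zero {N : ModuleCat S} {u : S} {ε : ModuleCat.of S S ⟶ N}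
    (hu : ε.hom u = 0) : mulHom u ≫ ε = 0 := by
  ext
  change ε.hom (u * 1) = 0
  rw [mul_one, hu]

lemma exact_mulHom {N : ModuleCat S} {u : S} {ε : ModuleCat.of S S ⟶ N} {w : mulHom u ≫ ε = 0}
    (h : ∀ s, ε.hom s = 0 ↔ u ∣ s) : (ShortComplex.mk (mulHom u) ε w).Exact := by
  rw [ShortComplex.ShortExact.moduleCat_exact_iff_function_exact]
  exact fun s => (h s).trans (exists_congr fun _ => eq_comm)

end IsExactPair

section Enveloping

attribute [local instance] TensorProduct.Algebra.module

variable (k A : Type) [CommRing k] [CommRing A] [Algebra k A]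

/-- The multiplication map `a ⊗ b ↦ a * b` of the enveloping algebra of a commutative algebra. -/
noncomputable def envelopingMul : A ⊗[k] Aᵐᵒᵖ →ₐ[A] A :=
  Algebra.TensorProduct.lift (AlgHom.id A A) (AlgEquiv.toOpposite k A).symm.toAlgHom
    fun _ _ => Commute.all _ _

@[simp]
lemma envelopingMul_tmul (a : A) (b : Aᵐᵒᵖ) : envelopingMul k A (a ⊗ₜ b) = a * b.unop := rfl

lemma envelopingMul_surjective : Function.Surjective (envelopingMul k A) :=
  fun a => ⟨a ⊗ₜ 1, by simp⟩

lemma enveloping_smul_eq_mul (s : A ⊗[k] Aᵐᵒᵖ) (a : A) : s • a = envelopingMul k A s * a := by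
  induction s with
  | zero => rw [map_zero, zero_mul]; exact zero_smul (A ⊗[k] Aᵐᵒᵖ) a
  | add s t hs ht => rw [add_smul, hs, ht, map_add, add_mul]
  | tmul b c =>
    rw [TensorProduct.Algebra.smul_def, envelopingMul_tmul, mul_right_comm, mul_assoc]
    rfl

/-- The augmentation of the enveloping algebra: `envelopingMul` as a map of bimodules. -/
noncomputable def augmentation :
    ModuleCat.of (A ⊗[k] Aᵐᵒᵖ) (A ⊗[k] Aᵐᵒᵖ) ⟶ ModuleCat.of (A ⊗[k] Aᵐᵒᵖ) A :=
  ModuleCat.ofHom (LinearMap.toSpanSingleton (A ⊗[k] Aᵐᵒᵖ) A 1)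

lemma augmentation_apply (s : A ⊗[k] Aᵐᵒᵖ) : (augmentation k A).hom s = envelopingMul k A s := by
  simp [augmentation, enveloping_smul_eq_mul]

instance : Epi (augmentation k A) :=
  (ModuleCat.epi_iff_surjective _).2 fun a =>
    (envelopingMul_surjective k A a).imp fun s hs => (augmentation_apply k A s).trans hs

/-- The pairs `(a ⊗ 1, 1 ⊗ a)`, whose coinvariants equate the left and right actions of `A`. -/
def leftRightPairs : Set ((A ⊗[k] Aᵐᵒᵖ) × (A ⊗[k] Aᵐᵒᵖ)) :=
  {p | ∃ a : A, p = (a ⊗ₜ[k] (1 : Aᵐᵒᵖ), (1 : A) ⊗ₜ[k] op a)}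

/-- `envelopingMul` on the restriction of scalars on which the coinvariants functor is defined. -/
noncomputable def restrictedMul :
    (ModuleCat.restrictScalars (algebraMap k (A ⊗[k] Aᵐᵒᵖ))).obj
      (ModuleCat.of (A ⊗[k] Aᵐᵒᵖ) (A ⊗[k] Aᵐᵒᵖ)) →ₗ[k] A where
  toFun := envelopingMul k A
  map_add' := map_add (envelopingMul k A)
  map_smul' r (s : A ⊗[k] Aᵐᵒᵖ) := by
    change envelopingMul k A (algebraMap k (A ⊗[k] Aᵐᵒᵖ) r * s) = r • envelopingMul k A s
    simp [Algebra.smul_def]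

lemma sub_one_tmul_mem_relSub (s : A ⊗[k] Aᵐᵒᵖ) :
    (s - 1 ⊗ₜ op (envelopingMul k A s) : A ⊗[k] Aᵐᵒᵖ) ∈
      relSub k (A ⊗[k] Aᵐᵒᵖ) (leftRightPairs k A) (ModuleCat.of _ (A ⊗[k] Aᵐᵒᵖ)) := by
  induction s with
  | zero => simpa using! zero_mem _
  | add s t hs ht =>
    rw [map_add, MulOpposite.op_add, TensorProduct.tmul_add, add_sub_add_comm]
    exact add_mem hs ht
  | tmul a b =>
    refine Submodule.subset_span ⟨_, ⟨a, rfl⟩, 1 ⊗ₜ b, ?_⟩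
    change _ = (a ⊗ₜ[k] (1 : Aᵐᵒᵖ)) * (1 ⊗ₜ b) - (1 ⊗ₜ op a) * (1 ⊗ₜ b)
    simp [mul_comm]
    rfl

lemma relSub_eq_ker_restrictedMul :
    relSub k (A ⊗[k] Aᵐᵒᵖ) (leftRightPairs k A) (ModuleCat.of _ (A ⊗[k] Aᵐᵒᵖ)) =
      LinearMap.ker (restrictedMul k A) := by
  apply le_antisymm
  · rw [relSub, Submodule.span_le]
    rintro _ ⟨_, ⟨a, rfl⟩, (s : A ⊗[k] Aᵐᵒᵖ), rfl⟩
    change envelopingMul k A ((a ⊗ₜ 1) * s - (1 ⊗ₜ op a) * s) = 0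
    simp
  · intro (s : A ⊗[k] Aᵐᵒᵖ) (hs : envelopingMul k A s = 0)
    have hs' : s = s - 1 ⊗ₜ op (envelopingMul k A s) := by
      rw [hs, op_zero, TensorProduct.tmul_zero, sub_zero]
    rw [hs']
    exact sub_one_tmul_mem_relSub k A s

/-- The coinvariants of the enveloping algebra, computed by `envelopingMul`. -/
noncomputable def coinvariantsEnvelopingEquiv :
    (coinvFunctor k (A ⊗[k] Aᵐᵒᵖ) (leftRightPairs k A)).obj (ModuleCat.of _ (A ⊗[k] Aᵐᵒᵖ))
      ≃ₗ[k] A :=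
  (Submodule.quotEquivOfEq _ _ (relSub_eq_ker_restrictedMul k A)).trans
    ((restrictedMul k A).quotKerEquivOfSurjective (envelopingMul_surjective k A))

variable {k A}

lemma coinvFunctor_map_mulHom_eq_zero {u : A ⊗[k] Aᵐᵒᵖ} (hu : envelopingMul k A u = 0) :
    (coinvFunctor k (A ⊗[k] Aᵐᵒᵖ) (leftRightPairs k A)).map (mulHom u) = 0 := by
  refine ModuleCat.hom_ext (Submodule.linearMap_qext _ (LinearMap.ext fun (s : A ⊗[k] Aᵐᵒᵖ) => ?_))
  refine (Submodule.Quotient.mk_eq_zero _).2 ?_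
  rw [relSub_eq_ker_restrictedMul]
  change envelopingMul k A (u * s) = 0
  rw [map_mul, hu, zero_mul]

lemma HochschildHomology.nonempty_linearEquiv_of_isExactPair {u v : A ⊗[k] Aᵐᵒᵖ}
    (huv : IsExactPair u v) (hu : ∀ s, envelopingMul k A s = 0 ↔ u ∣ s)
    (hv : envelopingMul k A v = 0) (n : ℕ) : Nonempty (HochschildHomology k A n ≃ₗ[k] A) := by
  have hu₀ : envelopingMul k A u = 0 := (hu u).2 dvd_rfl
  obtain ⟨i⟩ := periodicResolution_nonempty_leftDerived_iso
    (φ := mulHom v) (ψ := mulHom u) (ε := augmentation k A)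
    (hφψ := mulHom_comp_eq_zero ((huv.mul_left_eq_zero_iff v).2 dvd_rfl))
    (hψφ := mulHom_comp_eq_zero ((huv.mul_right_eq_zero_iff u).2 dvd_rfl))
    (hψε := mulHom_comp_eq_zero ((augmentation_apply k A u).trans hu₀))
    (exact_mulHom huv.mul_left_eq_zero_iff) (exact_mulHom huv.mul_right_eq_zero_iff)
    (exact_mulHom fun s => by rw [augmentation_apply, hu])
    (coinvFunctor k (A ⊗[k] Aᵐᵒᵖ) (leftRightPairs k A))
    (coinvFunctor_map_mulHom_eq_zero hv) (coinvFunctor_map_mulHom_eq_zero hu₀) n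
  exact ⟨i.toLinearEquiv.trans (coinvariantsEnvelopingEquiv k A)⟩

end Enveloping

section AdjoinRoot

open Polynomial

/-- Base change of the presentation `S = R[x]/(f)` to `T ⊗ S = T[x]/(f)`. -/
noncomputable def isAdjoinRootBaseChange {R S : Type*} [CommRing R] [CommRing S] [Algebra R S]
    (T : Type*) [CommRing T] [Algebra R T] {f : R[X]} (h : IsAdjoinRoot S f) :
    IsAdjoinRoot (T ⊗[R] S) (f.map (algebraMap R T)) where
  map := (Algebra.TensorProduct.map (AlgHom.id T T) h.map).comp (polyEquivTensor' R T).toAlgHom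
  map_surjective :=
    (LinearMap.lTensor_surjective T h.map_surjective).comp (polyEquivTensor' R T).surjective
  ker_map := by
    have hker := Algebra.TensorProduct.lTensor_ker (A := T) h.map h.map_surjective
    have hf : polyEquivTensor' R T (f.map (algebraMap R T)) = 1 ⊗ₜ f := by
      rw [← AlgEquiv.eq_symm_apply]
      simp
    rw [h.ker_map, Ideal.map_span, Set.image_singleton] at hker
    ext p
    rw [Ideal.mem_span_singleton, ← map_dvd_iff (polyEquivTensor' R T), hf,
      ← Ideal.mem_span_singleton]
    exact Ideal.ext_iff.1 hker (polyEquivTensor' R T p)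

lemma isAdjoinRootBaseChange_root {R S : Type*} [CommRing R] [CommRing S] [Algebra R S]
    (T : Type*) [CommRing T] [Algebra R T] {f : R[X]} (h : IsAdjoinRoot S f) :
    (isAdjoinRootBaseChange T h).root = 1 ⊗ₜ h.root := by
  simp [isAdjoinRootBaseChange, ← IsAdjoinRoot.map_X]

variable {k A : Type} [CommRing k] [CommRing A] [Algebra k A] {f : k[X]}

/-- The enveloping algebra of `A = k[x]/(f)` as `A[x]/(f)`. -/
noncomputable def isAdjoinRootEnveloping (h : IsAdjoinRoot A f) :
    IsAdjoinRoot (A ⊗[k] Aᵐᵒᵖ) (f.map (algebraMap k A)) :=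
  isAdjoinRootBaseChange A (h.ofAlgEquiv (AlgEquiv.toOpposite k A))

lemma envelopingMul_isAdjoinRootEnveloping_map (h : IsAdjoinRoot A f) (p : A[X]) :
    envelopingMul k A ((isAdjoinRootEnveloping h).map p) = p.eval h.root := by
  have : (envelopingMul k A).comp (isAdjoinRootEnveloping h).map = aeval h.root := by
    ext
    simp [isAdjoinRootEnveloping, isAdjoinRootBaseChange_root]
  rw [← coe_aeval_eq_eval, ← this]
  rfl

theorem HochschildHomology.nonempty_linearEquiv_of_derivative_eq_zero (h : IsAdjoinRootMonic A f)
    (hf : derivative f = 0) (n : ℕ) : Nonempty (HochschildHomology k A n ≃ₗ[k] A) := by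
  let E := isAdjoinRootEnveloping h.toIsAdjoinRoot
  have hroot : (f.map (algebraMap k A)).IsRoot h.root := by
    rw [IsRoot, eval_map_algebraMap, h.aeval_root_self]
  obtain ⟨q, hq⟩ := dvd_iff_isRoot.2 hroot
  have hqm : q.Monic := (monic_X_sub_C _).of_mul_monic_left (hq ▸ h.monic.map _)
  have huv : IsExactPair (E.map (X - C h.root)) (E.map q) :=
    .map_of_mul (φ := E.map.toRingHom) E.map_surjective (fun r => hq ▸ E.map_eq_zero_iff)
      (monic_X_sub_C _).mem_nonZeroDivisors hqm.mem_nonZeroDivisors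
  refine nonempty_linearEquiv_of_isExactPair huv (fun s => ?_) ?_ n
  · obtain ⟨p, rfl⟩ := E.map_surjective s
    rw [envelopingMul_isAdjoinRootEnveloping_map, ← IsRoot.def, ← dvd_iff_isRoot]
    exact (map_dvd_map_iff (φ := E.map.toRingHom) E.map_surjective fun r hr =>
      (Dvd.intro q hq.symm).trans (E.map_eq_zero_iff.1 hr)).symm
  · rw [envelopingMul_isAdjoinRootEnveloping_map]
    -- Differentiating `f = (X - x) q` at `x` gives `q(x) = f'(x) = 0`.
    have := congrArg (fun p => (derivative p).eval h.root) hq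
    simpa [derivative_map, hf] using this.symm

end AdjoinRoot

theorem hochschildHomology_dualNumbers_general {k A : Type} [CommRing k] [Nontrivial k]
    [CommRing A] [Algebra k A] {f : Polynomial k} (h : IsAdjoinRootMonic A f)
    (hf : Polynomial.derivative f = 0) (n : ℕ) :
    Module.finrank k (HochschildHomology k A n) = f.natDegree ∧
      Nonempty (HochschildHomology k A n ≃ₗ[k] A) := by
  obtain ⟨e⟩ := HochschildHomology.nonempty_linearEquiv_of_derivative_eq_zero h hf n
  exact ⟨e.finrank_eq.trans h.finrank, ⟨e⟩⟩

/-- For a field `k` of characteristic 2 and `A = k[x]/(x²)`, the Hochschild homology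
`HH_n(A, A)` is a 2-dimensional `k`-vector space, indeed isomorphic to `A` as a
`k`-vector space, for every `n`. -/
theorem hochschildHomology_dualNumbers (k : Type) [Field k] [CharP k 2] (n : ℕ) :
    Module.finrank k
      (HochschildHomology k (Polynomial k ⧸ Ideal.span {(Polynomial.X : Polynomial k) ^ 2}) n)
      = 2 ∧
    Nonempty
      ((HochschildHomology k (Polynomial k ⧸ Ideal.span {(Polynomial.X : Polynomial k) ^ 2}) n)
        ≃ₗ[k] (Polynomial k ⧸ Ideal.span {(Polynomial.X : Polynomial k) ^ 2})) := by
  have hderiv : Polynomial.derivative ((Polynomial.X : Polynomial k) ^ 2) = 0 := by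
    rw [Polynomial.derivative_X_pow, Nat.cast_ofNat, CharTwo.two_eq_zero, map_zero, zero_mul]
  simpa only [Polynomial.natDegree_X_pow] using! hochschildHomology_dualNumbers_general
    (AdjoinRoot.isAdjoinRootMonic _ (Polynomial.monic_X_pow 2)) hderiv n
end

section
/- The F₂-algebra presented by two generators a, b subject to the relations a² = 0, b² = 0, and abab = baba (i.e., the quotient of the free F₂-algebra on two generators by the two-sided ideal generated by a², b², and abab + baba) is isomorphic as an F₂-algebra to the group algebra F₂[D₈] of the dihedral group of order 8. -/
/-- The relations `a² = 0`, `b² = 0`, `abab = baba` defining the associated graded algebra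
of `A(1)` for the May filtration; here `a` is generator `0` and `b` is generator `1` of the
free `F₂`-algebra on two generators. -/
inductive E0A1Rel : FreeAlgebra (ZMod 2) (Fin 2) → FreeAlgebra (ZMod 2) (Fin 2) → Prop
  | asq : E0A1Rel (FreeAlgebra.ι (ZMod 2) 0 * FreeAlgebra.ι (ZMod 2) 0) 0
  | bsq : E0A1Rel (FreeAlgebra.ι (ZMod 2) 1 * FreeAlgebra.ι (ZMod 2) 1) 0
  | abab : E0A1Rel
      (FreeAlgebra.ι (ZMod 2) 0 * FreeAlgebra.ι (ZMod 2) 1 *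
        FreeAlgebra.ι (ZMod 2) 0 * FreeAlgebra.ι (ZMod 2) 1)
      (FreeAlgebra.ι (ZMod 2) 1 * FreeAlgebra.ι (ZMod 2) 0 *
        FreeAlgebra.ι (ZMod 2) 1 * FreeAlgebra.ι (ZMod 2) 0)

/-!
In characteristic two, `a ↦ 1 + a` matches square-zero elements with involutions. If `s = 1 + a` and
`t = 1 + b` are such involutions, then `st + ts = ab + ba`, where `st` and `ts` are mutually inverse
and `ab` and `ba` annihilate each other. Raising to the power `2 ^ k` is therefore additive on both
sides, so `(st) ^ 2 ^ k = (ts) ^ 2 ^ k`, that is `(st) ^ 2 ^ (k + 1) = 1`, holds if and only if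
`(ab) ^ 2 ^ k = (ba) ^ 2 ^ k`. Thus the dihedral relations on `s, t` are the given relations on
`a, b`; the theorem is the case `k = 1`.
-/

section DihedralGroup

open DihedralGroup

variable {n : ℕ} {G : Type*} [Group G]

theorem zpow_cast_intCast {g : G} (hg : g ^ n = 1) (k : ℤ) :
    g ^ ((k : ZMod n).cast : ℤ) = g ^ k := by
  rw [ZMod.coe_intCast, ← zpow_eq_zpow_emod' k hg]

theorem mul_zpow_mul_eq_mul_mul_zpow_neg {s t : G} (hs : s * s = 1) (ht : t * t = 1) (k : ℤ) :
    (s * t) ^ k * s = s * (s * t) ^ (-k) := by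
  have hst : SemiconjBy s (s * t)⁻¹ (s * t) := by
    rw [SemiconjBy, mul_inv_rev, inv_eq_of_mul_eq_one_left hs, inv_eq_of_mul_eq_one_left ht,
      mul_assoc]
  rw [zpow_neg, ← inv_zpow]
  exact (hst.zpow_right k).eq.symm

/-- The universal property of the dihedral group as the group generated by two involutions `s`
and `t` (the images of `sr 0` and `sr 1`) with `(st) ^ n = 1`. -/
def dihedralLift (s t : G) (hs : s * s = 1) (ht : t * t = 1) (hst : (s * t) ^ n = 1) :
    DihedralGroup n →* G where
  toFun
    | r i => (s * t) ^ (i.cast : ℤ)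
    | sr i => s * (s * t) ^ (i.cast : ℤ)
  map_one' := by
    simp only [one_def, ZMod.cast_zero, zpow_zero]
  map_mul' := by
    have hcomm := mul_zpow_mul_eq_mul_mul_zpow_neg hs ht
    rintro (i | i) (j | j) <;>
      obtain ⟨i, rfl⟩ := ZMod.intCast_surjective i <;>
      obtain ⟨j, rfl⟩ := ZMod.intCast_surjective j <;>
      simp only [r_mul_r, r_mul_sr, sr_mul_r, sr_mul_sr, ← Int.cast_add, ← Int.cast_sub,
        zpow_cast_intCast hst]
    · exact zpow_add _ i j
    · rw [← mul_assoc, hcomm, mul_assoc, ← zpow_add, neg_add_eq_sub]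
    · rw [zpow_add, mul_assoc]
    · rw [mul_assoc, ← mul_assoc _ s, hcomm, mul_assoc s, ← mul_assoc s s, hs, one_mul, ← zpow_add,
        neg_add_eq_sub]

section

variable {s t : G} (hs : s * s = 1) (ht : t * t = 1) (hst : (s * t) ^ n = 1)

theorem dihedralLift_sr_zero : dihedralLift s t hs ht hst (sr 0) = s := by
  simp only [dihedralLift, MonoidHom.coe_mk, OneHom.coe_mk, ZMod.cast_zero, zpow_zero, mul_one]

theorem dihedralLift_sr_one : dihedralLift s t hs ht hst (sr 1) = t := by
  have hcast := zpow_cast_intCast hst 1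
  rw [Int.cast_one, zpow_one] at hcast
  simp only [dihedralLift, MonoidHom.coe_mk, OneHom.coe_mk, hcast, ← mul_assoc, hs, one_mul]

end

theorem closure_sr_zero_sr_one :
    Subgroup.closure {sr 0, sr 1} = (⊤ : Subgroup (DihedralGroup n)) := by
  set H := Subgroup.closure {sr 0, (sr 1 : DihedralGroup n)}
  have hsr : sr 0 ∈ H := Subgroup.subset_closure (Set.mem_insert _ _)
  have hr : r 1 ∈ H := by
    simpa only [sr_mul_sr, sub_zero] using
      H.mul_mem hsr (Subgroup.subset_closure (Set.mem_insert_of_mem _ rfl))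
  have hr_all (i : ZMod n) : r i ∈ H := by
    obtain ⟨k, rfl⟩ := ZMod.intCast_surjective i
    exact r_one_zpow (n := n) k ▸ H.zpow_mem hr k
  refine Subgroup.eq_top_iff' H |>.mpr ?_
  rintro (i | i)
  · exact hr_all i
  · simpa only [sr_mul_r, zero_add] using H.mul_mem hsr (hr_all i)

theorem dihedralGroup_hom_ext {M : Type*} [Monoid M] {f g : DihedralGroup n →* M}
    (h₀ : f (sr 0) = g (sr 0)) (h₁ : f (sr 1) = g (sr 1)) : f = g := by
  refine MonoidHom.eq_of_eqOn_dense closure_sr_zero_sr_one ?_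
  rintro _ (rfl | rfl)
  exacts [h₀, h₁]

end DihedralGroup

section MulSelf

theorem mul_mul_mul_eq_one_of_mul_self_eq_one {M : Type*} [Monoid M] {s t : M} (hs : s * s = 1)
    (ht : t * t = 1) : s * t * (t * s) = 1 := by
  rw [mul_assoc, ← mul_assoc t, ht, one_mul, hs]

theorem mul_pow_mul_two_eq_one_iff {M : Type*} [Monoid M] {s t : M} (hs : s * s = 1)
    (ht : t * t = 1) (m : ℕ) : (s * t) ^ (m * 2) = 1 ↔ (s * t) ^ m = (t * s) ^ m := by
  have hst := mul_mul_mul_eq_one_of_mul_self_eq_one hs ht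
  have hts := mul_mul_mul_eq_one_of_mul_self_eq_one ht hs
  have hinv : (t * s) ^ m * (s * t) ^ m = 1 := by
    rw [← Commute.mul_pow (hts.trans hst.symm), hts, one_pow]
  have hinv' : (s * t) ^ m * (t * s) ^ m = 1 := by
    rw [← Commute.mul_pow (hst.trans hts.symm), hst, one_pow]
  rw [pow_mul, sq]
  constructor
  · intro h
    exact (left_inv_eq_right_inv hinv h).symm
  · intro h
    nth_rw 2 [h]
    exact hinv'

theorem mul_mul_mul_eq_zero_of_mul_self_eq_zero {M : Type*} [SemigroupWithZero M] (a : M) {b : M}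
    (hb : b * b = 0) : a * b * (b * a) = 0 := by
  rw [mul_assoc, ← mul_assoc b, hb, zero_mul, mul_zero]

end MulSelf

section CharTwo

variable {A : Type*} [Ring A] [CharP A 2] {a b : A}

theorem one_add_mul_self_eq_one_iff : (1 + a) * (1 + a) = 1 ↔ a * a = 0 := by
  have hsq : (1 + a) * (1 + a) = 1 + a * a := by
    rw [← sq, add_pow_char_of_commute 2 (Commute.one_left a), one_pow, sq]
  rw [hsq, add_eq_left]

/-- The unit `1 + a` attached to a square-zero element `a` in characteristic two. -/
def oneAddUnit (ha : a * a = 0) : Aˣ where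
  val := 1 + a
  inv := 1 + a
  val_inv := one_add_mul_self_eq_one_iff.mpr ha
  inv_val := one_add_mul_self_eq_one_iff.mpr ha

theorem oneAddUnit_mul_self (ha : a * a = 0) : oneAddUnit ha * oneAddUnit ha = 1 :=
  Units.ext (one_add_mul_self_eq_one_iff.mpr ha)

theorem one_add_mul_one_add_add_one_add_mul_one_add (a b : A) :
    (1 + a) * (1 + b) + (1 + b) * (1 + a) = a * b + b * a := by
  have hsum : (1 + a) * (1 + b) + (1 + b) * (1 + a) =
      (a * b + b * a) + ((1 + a + b) + (1 + a + b)) := by noncomm_ring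
  rw [hsum, CharTwo.add_self_eq_zero, add_zero]

theorem one_add_mul_one_add_pow_two_pow_add (ha : a * a = 0) (hb : b * b = 0) (k : ℕ) :
    ((1 + a) * (1 + b)) ^ 2 ^ k + ((1 + b) * (1 + a)) ^ 2 ^ k =
      (a * b) ^ 2 ^ k + (b * a) ^ 2 ^ k := by
  have hs := one_add_mul_self_eq_one_iff.mpr ha
  have ht := one_add_mul_self_eq_one_iff.mpr hb
  have hst : Commute ((1 + a) * (1 + b)) ((1 + b) * (1 + a)) :=
    (mul_mul_mul_eq_one_of_mul_self_eq_one hs ht).trans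
      (mul_mul_mul_eq_one_of_mul_self_eq_one ht hs).symm
  have hab : Commute (a * b) (b * a) :=
    (mul_mul_mul_eq_zero_of_mul_self_eq_zero a hb).trans
      (mul_mul_mul_eq_zero_of_mul_self_eq_zero b ha).symm
  rw [← add_pow_char_pow_of_commute 2 k hst, ← add_pow_char_pow_of_commute 2 k hab,
    one_add_mul_one_add_add_one_add_mul_one_add]

theorem one_add_mul_one_add_pow_eq_one_iff (ha : a * a = 0) (hb : b * b = 0) (k : ℕ) :
    ((1 + a) * (1 + b)) ^ 2 ^ (k + 1) = 1 ↔ (a * b) ^ 2 ^ k = (b * a) ^ 2 ^ k := by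
  rw [pow_succ, mul_pow_mul_two_eq_one_iff (one_add_mul_self_eq_one_iff.mpr ha)
    (one_add_mul_self_eq_one_iff.mpr hb), ← CharTwo.add_eq_zero,
    one_add_mul_one_add_pow_two_pow_add ha hb, CharTwo.add_eq_zero]

end CharTwo

section Augmentation

variable {R : Type*} [CommSemiring R] (p : ℕ) [CharP R p]

theorem charP_of_augmentation {A : Type*} [Semiring A] [Algebra R A] (ε : A →ₐ[R] R) : CharP A p :=
  charP_of_injective_algebraMap (Function.LeftInverse.injective ε.commutes) p

instance {G : Type*} [Monoid G] : CharP (MonoidAlgebra R G) p :=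
  charP_of_augmentation p (MonoidAlgebra.lift R R G 1)

end Augmentation

/-- The relations `a² = 0`, `b² = 0` and `(ab) ^ m = (ba) ^ m` on the free `R`-algebra on two
generators, `a` being generator `0` and `b` generator `1`. -/
inductive SqZeroBraidRel (R : Type*) [CommSemiring R] (m : ℕ) :
    FreeAlgebra R (Fin 2) → FreeAlgebra R (Fin 2) → Prop
  | sq_zero (i : Fin 2) : SqZeroBraidRel R m (FreeAlgebra.ι R i * FreeAlgebra.ι R i) 0
  | braid : SqZeroBraidRel R m ((FreeAlgebra.ι R 0 * FreeAlgebra.ι R 1) ^ m)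
      ((FreeAlgebra.ι R 1 * FreeAlgebra.ι R 0) ^ m)

theorem e0A1Rel_eq_sqZeroBraidRel : E0A1Rel = SqZeroBraidRel (ZMod 2) 2 := by
  have hsq (x y : FreeAlgebra (ZMod 2) (Fin 2)) : (x * y) ^ 2 = x * y * x * y := by
    rw [sq, ← mul_assoc]
  funext x y
  refine propext ⟨?_, ?_⟩
  · rintro (_ | _ | _)
    · exact .sq_zero 0
    · exact .sq_zero 1
    · simpa only [hsq] using SqZeroBraidRel.braid (R := ZMod 2) (m := 2)
  · rintro (i | _)
    · fin_cases i
      exacts [.asq, .bsq]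
    · simpa only [hsq] using E0A1Rel.abab

/-- The `R`-algebra presented by two square-zero generators `a, b` with `(ab) ^ m = (ba) ^ m`. -/
abbrev SqZeroBraidAlgebra (R : Type*) [CommSemiring R] (m : ℕ) : Type _ :=
  RingQuot (SqZeroBraidRel R m)

namespace SqZeroBraidAlgebra

variable (R : Type*) [CommSemiring R] (m : ℕ)

/-- The generators of the presented algebra: `gen R m 0` is `a` and `gen R m 1` is `b`. -/
noncomputable def gen (i : Fin 2) : SqZeroBraidAlgebra R m :=
  RingQuot.mkAlgHom R (SqZeroBraidRel R m) (FreeAlgebra.ι R i)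

theorem gen_mul_self (i : Fin 2) : gen R m i * gen R m i = 0 := by
  simpa only [gen, map_mul, map_zero] using
    RingQuot.mkAlgHom_rel R (SqZeroBraidRel.sq_zero (R := R) (m := m) i)

theorem gen_braid : (gen R m 0 * gen R m 1) ^ m = (gen R m 1 * gen R m 0) ^ m := by
  simpa only [gen, map_mul, map_pow] using
    RingQuot.mkAlgHom_rel R (SqZeroBraidRel.braid (R := R) (m := m))

variable {R m} {A : Type*} [Semiring A] [Algebra R A]

/-- The universal property of the presented algebra: elements `x 0, x 1` satisfying the relations
are the images of the generators under an algebra homomorphism. -/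
noncomputable def lift (x : Fin 2 → A) (hsq : ∀ i, x i * x i = 0)
    (hbraid : (x 0 * x 1) ^ m = (x 1 * x 0) ^ m) : SqZeroBraidAlgebra R m →ₐ[R] A :=
  RingQuot.liftAlgHom R ⟨FreeAlgebra.lift R x, by
    rintro _ _ (i | _)
    · simpa only [map_mul, map_zero, FreeAlgebra.lift_ι_apply] using hsq i
    · simpa only [map_mul, map_pow, FreeAlgebra.lift_ι_apply] using hbraid⟩

theorem lift_gen (x : Fin 2 → A) (hsq : ∀ i, x i * x i = 0)
    (hbraid : (x 0 * x 1) ^ m = (x 1 * x 0) ^ m) (i : Fin 2) :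
    lift (R := R) x hsq hbraid (gen R m i) = x i := by
  rw [lift, gen, RingQuot.liftAlgHom_mkAlgHom_apply, FreeAlgebra.lift_ι_apply]

theorem algHom_ext {f g : SqZeroBraidAlgebra R m →ₐ[R] A}
    (h : ∀ i, f (gen R m i) = g (gen R m i)) : f = g :=
  RingQuot.ringQuot_ext' _ _ _ (FreeAlgebra.hom_ext (funext h))

instance (p : ℕ) [CharP R p] : CharP (SqZeroBraidAlgebra R m) p :=
  charP_of_augmentation p (lift (R := R) 0 (fun _ ↦ mul_zero 0) rfl)

end SqZeroBraidAlgebra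

/-- The group algebra of the dihedral group of order `2n`. -/
abbrev DihedralGroupAlgebra (R : Type*) [CommSemiring R] (n : ℕ) : Type _ :=
  MonoidAlgebra R (DihedralGroup n)

namespace DihedralGroupAlgebra

open DihedralGroup MonoidAlgebra

section Lift

variable (R : Type*) [CommSemiring R]

/-- The elements `1 + s` and `1 + t` of the group algebra, for the reflections `s = sr 0` and
`t = sr 1` generating the dihedral group. -/
noncomputable def gen (n : ℕ) (i : Fin 2) : DihedralGroupAlgebra R n :=
  1 + of R (DihedralGroup n) (sr (i.val : ZMod n))

variable {R} {A : Type*} [Ring A] [Algebra R A]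

theorem algHom_ext {n : ℕ} {f g : DihedralGroupAlgebra R n →ₐ[R] A}
    (h : ∀ i, f (gen R n i) = g (gen R n i)) : f = g := by
  have hsr (i : Fin 2) : f (of R _ (sr (i.val : ZMod n))) = g (of R _ (sr (i.val : ZMod n))) := by
    simpa only [gen, map_add, map_one, add_right_inj] using h i
  refine MonoidAlgebra.algHom_ext' (dihedralGroup_hom_ext ?_ ?_) (Subsingleton.elim _ _)
  · simpa using hsr 0
  · simpa using hsr 1

variable [CharP A 2] {k : ℕ}

/-- In characteristic two, the group algebra of the dihedral group of order `2 ^ (k + 2)` has the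
universal property of the algebra with two square-zero generators satisfying
`(ab) ^ 2 ^ k = (ba) ^ 2 ^ k`. -/
noncomputable def lift (x : Fin 2 → A) (hsq : ∀ i, x i * x i = 0)
    (hbraid : (x 0 * x 1) ^ 2 ^ k = (x 1 * x 0) ^ 2 ^ k) :
    DihedralGroupAlgebra R (2 ^ (k + 1)) →ₐ[R] A :=
  MonoidAlgebra.lift R A _ <| (Units.coeHom A).comp <|
    dihedralLift (oneAddUnit (hsq 0)) (oneAddUnit (hsq 1))
      (oneAddUnit_mul_self _) (oneAddUnit_mul_self _)
      (Units.ext ((one_add_mul_one_add_pow_eq_one_iff (hsq 0) (hsq 1) k).mpr hbraid))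

theorem lift_gen (x : Fin 2 → A) (hsq : ∀ i, x i * x i = 0)
    (hbraid : (x 0 * x 1) ^ 2 ^ k = (x 1 * x 0) ^ 2 ^ k) (i : Fin 2) :
    lift (R := R) x hsq hbraid (gen R (2 ^ (k + 1)) i) = x i := by
  have hsr : lift (R := R) x hsq hbraid (of R _ (sr (i.val : ZMod (2 ^ (k + 1))))) = 1 + x i := by
    rw [lift, MonoidAlgebra.lift_of, MonoidHom.comp_apply, Units.coeHom_apply]
    fin_cases i
    · simp [dihedralLift_sr_zero, oneAddUnit]
    · simp [dihedralLift_sr_one, oneAddUnit]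
  rw [gen, map_add, map_one, hsr, CharTwo.add_cancel_left]

end Lift

section CharTwo

variable (R : Type*) [CommRing R] [CharP R 2]

theorem one_add_gen (n : ℕ) (i : Fin 2) : 1 + gen R n i = of R _ (sr (i.val : ZMod n)) :=
  CharTwo.add_cancel_left _ _

theorem gen_mul_self (n : ℕ) (i : Fin 2) : gen R n i * gen R n i = 0 := by
  rw [← one_add_mul_self_eq_one_iff, one_add_gen, ← map_mul, sr_mul_self, map_one]

theorem gen_braid (k : ℕ) :
    (gen R (2 ^ (k + 1)) 0 * gen R (2 ^ (k + 1)) 1) ^ 2 ^ k =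
      (gen R (2 ^ (k + 1)) 1 * gen R (2 ^ (k + 1)) 0) ^ 2 ^ k := by
  rw [← one_add_mul_one_add_pow_eq_one_iff (gen_mul_self R _ 0) (gen_mul_self R _ 1), one_add_gen,
    one_add_gen, ← map_mul, ← map_pow, Fin.val_zero, Fin.val_one, Nat.cast_zero, Nat.cast_one,
    sr_mul_sr, sub_zero, r_one_pow_n, map_one]

end CharTwo

end DihedralGroupAlgebra

theorem presentedAlgebra_iso_groupAlgebra_dihedral_general (R : Type*) [CommRing R] [CharP R 2]
    (k : ℕ) : Nonempty (RingQuot (SqZeroBraidRel R (2 ^ k)) ≃ₐ[R]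
      MonoidAlgebra R (DihedralGroup (2 ^ (k + 1)))) := by
  let toGroupAlgebra : SqZeroBraidAlgebra R (2 ^ k) →ₐ[R] DihedralGroupAlgebra R (2 ^ (k + 1)) :=
    SqZeroBraidAlgebra.lift (DihedralGroupAlgebra.gen R _) (DihedralGroupAlgebra.gen_mul_self R _)
      (DihedralGroupAlgebra.gen_braid R k)
  let ofGroupAlgebra : DihedralGroupAlgebra R (2 ^ (k + 1)) →ₐ[R] SqZeroBraidAlgebra R (2 ^ k) :=
    DihedralGroupAlgebra.lift (SqZeroBraidAlgebra.gen R _) (SqZeroBraidAlgebra.gen_mul_self R _)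
      (SqZeroBraidAlgebra.gen_braid R _)
  refine ⟨AlgEquiv.ofAlgHom toGroupAlgebra ofGroupAlgebra
    (DihedralGroupAlgebra.algHom_ext fun i ↦ ?_) (SqZeroBraidAlgebra.algHom_ext fun i ↦ ?_)⟩
  all_goals
    simp only [toGroupAlgebra, ofGroupAlgebra, AlgHom.comp_apply, AlgHom.id_apply,
      DihedralGroupAlgebra.lift_gen, SqZeroBraidAlgebra.lift_gen]

/-- The `F₂`-algebra presented by generators `a, b` with relations `a² = 0`, `b² = 0` and
`abab = baba` is isomorphic, as an `F₂`-algebra, to the group algebra `F₂[D₈]` of the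
dihedral group of order 8. -/
theorem presentedAlgebra_iso_groupAlgebra_dihedral :
    Nonempty (RingQuot E0A1Rel ≃ₐ[ZMod 2] MonoidAlgebra (ZMod 2) (DihedralGroup 4)) :=
  e0A1Rel_eq_sqZeroBraidRel ▸ presentedAlgebra_iso_groupAlgebra_dihedral_general (ZMod 2) 1
end

section
/- The zeroth Hochschild homology of A(1), i.e., the quotient of A(1) by the F₂-linear span of all commutators xy − yx with x, y ∈ A(1), is an F₂-vector space of dimension 5. -/
/-- The relations defining `A(1)`: `Sq¹·Sq¹ = 0` and `Sq²·Sq² + Sq¹·Sq²·Sq¹ = 0`. -/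
inductive A1Rel : FreeAlgebra (ZMod 2) (Fin 2) → FreeAlgebra (ZMod 2) (Fin 2) → Prop
  | sq1 : A1Rel (FreeAlgebra.ι (ZMod 2) 0 * FreeAlgebra.ι (ZMod 2) 0) 0
  | sq2 : A1Rel (FreeAlgebra.ι (ZMod 2) 1 * FreeAlgebra.ι (ZMod 2) 1 +
      FreeAlgebra.ι (ZMod 2) 0 * FreeAlgebra.ι (ZMod 2) 1 * FreeAlgebra.ι (ZMod 2) 0) 0

/-- `A(1)`, the subalgebra of the mod 2 Steenrod algebra generated by `Sq¹` and `Sq²`, presented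
as the quotient of the free `F₂`-algebra on two generators `Sq1, Sq2` by the two-sided ideal
generated by `Sq1·Sq1` and `Sq2·Sq2 + Sq1·Sq2·Sq1`. -/
abbrev A1 : Type := RingQuot A1Rel

/-- The image of `Sq¹` in `A(1)`. -/
noncomputable def Sq1 : A1 := RingQuot.mkAlgHom (ZMod 2) A1Rel (FreeAlgebra.ι (ZMod 2) 0)

/-- The image of `Sq²` in `A(1)`. -/
noncomputable def Sq2 : A1 := RingQuot.mkAlgHom (ZMod 2) A1Rel (FreeAlgebra.ι (ZMod 2) 1)

/-- Milnor's element `Q₀ = Sq¹·Sq² + Sq²·Sq¹` in `A(1)`. -/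
noncomputable def Q0 : A1 := Sq1 * Sq2 + Sq2 * Sq1

/-!
Write `a = Sq¹` and `b = Sq²`. The relations `a² = 0` and `b² = aba` give `baba = b³ = abab`, so the
eight words `1, a, b, ab, ba, aba, bab, abab` span `A(1)`; they are independent because left
multiplication by `a` and `b` on formal combinations of these words satisfies the relations.
Modulo commutators `ab ≡ ba`, `aba ≡ ba² = 0` and `bab ≡ ab² = a²ba = 0`, which leaves the classes
of `1, a, b, ab, abab`. No further collapse occurs: the linear map defined on words by exactly these
identifications takes equal values on `gw` and `wg` for every generator `g` and word `w`, hence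
vanishes on all commutators.
-/

section Generators

variable {R A M : Type*} [CommSemiring R] [Semiring A] [Algebra R A] [AddCommMonoid M] [Module R M]
  {s t : Set A}

theorem span_eq_top_of_mul_mem_span (hs : Algebra.adjoin R s = ⊤)
    (one_mem : 1 ∈ Submodule.span R t)
    (mul_mem : ∀ g ∈ s, ∀ x ∈ t, g * x ∈ Submodule.span R t) : Submodule.span R t = ⊤ := by
  have left_ideal (x : A) : ∀ y ∈ Submodule.span R t, x * y ∈ Submodule.span R t := by
    have hx : x ∈ Algebra.adjoin R s := hs ▸ Algebra.mem_top
    induction hx using Algebra.adjoin_induction with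
    | mem g hg =>
      exact Submodule.span_le (p := (Submodule.span R t).comap (LinearMap.mulLeft R g)).2
        (mul_mem g hg)
    | algebraMap r =>
      intro y hy
      rw [← Algebra.smul_def]
      exact Submodule.smul_mem _ r hy
    | add x x' _ _ hx hx' =>
      intro y hy
      rw [add_mul]
      exact add_mem (hx y hy) (hx' y hy)
    | mul x x' _ _ hx hx' =>
      intro y hy
      rw [mul_assoc]
      exact hx _ (hx' y hy)
  exact Submodule.eq_top_iff'.2 fun x => mul_one x ▸ left_ideal x 1 one_mem

theorem map_mul_comm_of_adjoin_eq_top (f : A →ₗ[R] M) (hs : Algebra.adjoin R s = ⊤)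
    (ht : Submodule.span R t = ⊤) (h : ∀ g ∈ s, ∀ x ∈ t, f (g * x) = f (x * g)) (x y : A) :
    f (x * y) = f (y * x) := by
  have hx : x ∈ Algebra.adjoin R s := hs ▸ Algebra.mem_top
  induction hx using Algebra.adjoin_induction generalizing y with
  | mem g hg =>
    have hfg : f ∘ₗ LinearMap.mulLeft R g = f ∘ₗ LinearMap.mulRight R g :=
      LinearMap.ext_on ht (h g hg)
    exact LinearMap.congr_fun hfg y
  | algebraMap r => rw [Algebra.commutes]
  | add x x' _ _ hx hx' => rw [add_mul, mul_add, map_add, map_add, hx, hx']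
  | mul x x' _ _ hx hx' => rw [mul_assoc, hx, mul_assoc, hx', mul_assoc]

end Generators

section CommutatorSpan

variable (R A : Type*) [CommRing R] [Ring A] [Algebra R A]

/-- The `R`-linear span of the additive commutators of `A`, so that `A ⧸ commutatorSpan R A` is the
zeroth Hochschild homology of `A`. -/
def commutatorSpan : Submodule R A :=
  Submodule.span R {x : A | ∃ a b : A, x = a * b - b * a}

variable {A}

theorem commutatorSpan_mkQ_mul_comm (a b : A) :
    (commutatorSpan R A).mkQ (a * b) = (commutatorSpan R A).mkQ (b * a) :=
  (Submodule.Quotient.eq _).2 (Submodule.subset_span ⟨a, b, rfl⟩)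

variable {R}

theorem commutatorSpan_le_ker {M : Type*} [AddCommGroup M] [Module R M] {f : A →ₗ[R] M}
    (hf : ∀ a b, f (a * b) = f (b * a)) : commutatorSpan R A ≤ LinearMap.ker f := by
  refine Submodule.span_le.2 ?_
  rintro _ ⟨a, b, rfl⟩
  rw [SetLike.mem_coe, LinearMap.mem_ker, map_sub, hf, sub_self]

end CommutatorSpan

namespace A1

section Presentation

theorem adjoin_Sq1_Sq2 : Algebra.adjoin (ZMod 2) {Sq1, Sq2} = (⊤ : Subalgebra (ZMod 2) A1) := by
  have hrange : ({Sq1, Sq2} : Set A1) =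
      RingQuot.mkAlgHom (ZMod 2) A1Rel '' Set.range (FreeAlgebra.ι (ZMod 2)) := by
    ext z
    simp [Sq1, Sq2, Fin.exists_fin_two, eq_comm]
  rw [hrange, ← AlgHom.map_adjoin, FreeAlgebra.adjoin_range_ι, Algebra.map_top,
    AlgHom.range_eq_top]
  exact RingQuot.mkAlgHom_surjective (ZMod 2) A1Rel

variable {B : Type*} [Semiring B] [Algebra (ZMod 2) B] {x y : B}

/-- The universal property of the presentation of `A(1)`: the algebra map sending `Sq¹` to `x` and
`Sq²` to `y`. -/
noncomputable def lift (hx : x * x = 0) (hxy : y * y + x * y * x = 0) : A1 →ₐ[ZMod 2] B :=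
  RingQuot.liftAlgHom (ZMod 2) ⟨FreeAlgebra.lift (ZMod 2) ![x, y], by
    rintro _ _ (_ | _) <;> simpa⟩

theorem lift_Sq1 (hx : x * x = 0) (hxy : y * y + x * y * x = 0) : lift hx hxy Sq1 = x := by
  simp [lift, Sq1]

theorem lift_Sq2 (hx : x * x = 0) (hxy : y * y + x * y * x = 0) : lift hx hxy Sq2 = y := by
  simp [lift, Sq2]

end Presentation

section Words

theorem Sq1_mul_Sq1 : Sq1 * Sq1 = 0 := by
  simpa [Sq1] using RingQuot.mkAlgHom_rel (ZMod 2) A1Rel.sq1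

theorem Sq2_mul_Sq2 : Sq2 * Sq2 = Sq1 * (Sq2 * Sq1) := by
  have h : Sq2 * Sq2 + Sq1 * Sq2 * Sq1 = 0 := by
    simpa [Sq1, Sq2] using RingQuot.mkAlgHom_rel (ZMod 2) A1Rel.sq2
  rw [eq_neg_of_add_eq_zero_left h, ZModModule.neg_eq_self, mul_assoc]

theorem Sq1_mul_Sq1_mul (x : A1) : Sq1 * (Sq1 * x) = 0 := by
  rw [← mul_assoc, Sq1_mul_Sq1, zero_mul]

theorem Sq2_mul_Sq2_mul (x : A1) : Sq2 * (Sq2 * x) = Sq1 * (Sq2 * (Sq1 * x)) := by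
  rw [← mul_assoc, Sq2_mul_Sq2, mul_assoc, mul_assoc]

theorem Sq2_Sq1_Sq2_Sq1 : Sq2 * (Sq1 * (Sq2 * Sq1)) = Sq1 * (Sq2 * (Sq1 * Sq2)) := by
  rw [← Sq2_mul_Sq2, Sq2_mul_Sq2_mul]

theorem Sq2_Sq1_Sq2_Sq1_mul (x : A1) :
    Sq2 * (Sq1 * (Sq2 * (Sq1 * x))) = Sq1 * (Sq2 * (Sq1 * (Sq2 * x))) := by
  simpa only [mul_assoc] using congrArg (· * x) Sq2_Sq1_Sq2_Sq1

/-- The words in `Sq¹` and `Sq²` that form the basis of `A(1)`. -/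
noncomputable def word : Fin 8 → A1 :=
  ![1, Sq1, Sq2, Sq1 * Sq2, Sq2 * Sq1, Sq1 * (Sq2 * Sq1), Sq2 * (Sq1 * Sq2),
    Sq1 * (Sq2 * (Sq1 * Sq2))]

theorem Sq1_mul_word (i : Fin 8) :
    Sq1 * word i = ![word 1, 0, word 3, 0, word 5, 0, word 7, 0] i := by
  fin_cases i <;> simp [word, Sq1_mul_Sq1, Sq1_mul_Sq1_mul]

theorem Sq2_mul_word (i : Fin 8) :
    Sq2 * word i = ![word 2, word 4, word 5, word 6, 0, word 7, 0, 0] i := by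
  fin_cases i <;>
    simp [word, Sq1_mul_Sq1, Sq1_mul_Sq1_mul, Sq2_mul_Sq2, Sq2_mul_Sq2_mul, Sq2_Sq1_Sq2_Sq1,
      Sq2_Sq1_Sq2_Sq1_mul]

theorem word_mul_Sq1 (i : Fin 8) :
    word i * Sq1 = ![word 1, 0, word 4, word 5, 0, 0, word 7, 0] i := by
  fin_cases i <;> simp [word, mul_assoc, Sq1_mul_Sq1, Sq1_mul_Sq1_mul, Sq2_Sq1_Sq2_Sq1]

theorem word_mul_Sq2 (i : Fin 8) :
    word i * Sq2 = ![word 2, word 3, word 5, 0, word 6, word 7, 0, 0] i := by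
  fin_cases i <;> simp [word, mul_assoc, Sq1_mul_Sq1_mul, Sq2_mul_Sq2]

theorem span_range_word : Submodule.span (ZMod 2) (Set.range word) = ⊤ := by
  have word_mem (i : Fin 8) : word i ∈ Submodule.span (ZMod 2) (Set.range word) :=
    Submodule.subset_span ⟨i, rfl⟩
  refine span_eq_top_of_mul_mem_span adjoin_Sq1_Sq2 (word_mem 0) ?_
  rintro _ (rfl | rfl) _ ⟨i, rfl⟩
  · rw [Sq1_mul_word]
    fin_cases i <;> simp [word_mem]
  · rw [Sq2_mul_word]
    fin_cases i <;> simp [word_mem]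

end Words

section Basis

/-- Left multiplication by `Sq¹` on formal linear combinations of words, after `Sq1_mul_word`. -/
noncomputable def formalSq1 : Module.End (ZMod 2) (Fin 8 → ZMod 2) :=
  (Pi.basisFun (ZMod 2) (Fin 8)).constr (ZMod 2)
    ![Pi.single 1 1, 0, Pi.single 3 1, 0, Pi.single 5 1, 0, Pi.single 7 1, 0]

/-- Left multiplication by `Sq²` on formal linear combinations of words, after `Sq2_mul_word`. -/
noncomputable def formalSq2 : Module.End (ZMod 2) (Fin 8 → ZMod 2) :=
  (Pi.basisFun (ZMod 2) (Fin 8)).constr (ZMod 2)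
    ![Pi.single 2 1, Pi.single 4 1, Pi.single 5 1, Pi.single 6 1, 0, Pi.single 7 1, 0, 0]

theorem formalSq1_single (i : Fin 8) : formalSq1 (Pi.single i 1) =
    ![Pi.single 1 1, 0, Pi.single 3 1, 0, Pi.single 5 1, 0, Pi.single 7 1, 0] i := by
  rw [← Pi.basisFun_apply, formalSq1, Module.Basis.constr_basis]

theorem formalSq2_single (i : Fin 8) : formalSq2 (Pi.single i 1) =
    ![Pi.single 2 1, Pi.single 4 1, Pi.single 5 1, Pi.single 6 1, 0, Pi.single 7 1, 0, 0] i := by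
  rw [← Pi.basisFun_apply, formalSq2, Module.Basis.constr_basis]

theorem formalSq1_mul_self : formalSq1 * formalSq1 = 0 := by
  refine (Pi.basisFun (ZMod 2) (Fin 8)).ext fun i => ?_
  fin_cases i <;> simp [formalSq1_single]

theorem formalSq2_mul_self_add :
    formalSq2 * formalSq2 + formalSq1 * formalSq2 * formalSq1 = 0 := by
  refine (Pi.basisFun (ZMod 2) (Fin 8)).ext fun i => ?_
  fin_cases i <;> simp [formalSq1_single, formalSq2_single, ZModModule.add_self]

/-- The action of `A(1)` on formal linear combinations of words. -/
noncomputable def formalAction : A1 →ₐ[ZMod 2] Module.End (ZMod 2) (Fin 8 → ZMod 2) :=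
  lift formalSq1_mul_self formalSq2_mul_self_add

/-- The coordinates of an element of `A(1)` with respect to the words, read off from its action on
the empty word. -/
noncomputable def coord : A1 →ₗ[ZMod 2] Fin 8 → ZMod 2 :=
  LinearMap.applyₗ (Pi.single 0 1) ∘ₗ formalAction.toLinearMap

theorem coord_word (i : Fin 8) : coord (word i) = Pi.single i 1 := by
  fin_cases i <;>
    simp [coord, word, formalAction, lift_Sq1, lift_Sq2, formalSq1_single, formalSq2_single]

theorem linearIndependent_word : LinearIndependent (ZMod 2) word := by
  refine LinearIndependent.of_comp coord ?_
  convert (Pi.basisFun (ZMod 2) (Fin 8)).linearIndependent using 1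
  exact funext fun i => (coord_word i).trans (Pi.basisFun_apply _ _ i).symm

/-- The basis of `A(1)` consisting of the eight words. -/
noncomputable def wordBasis : Module.Basis (Fin 8) (ZMod 2) A1 :=
  Module.Basis.mk linearIndependent_word span_range_word.ge

theorem wordBasis_apply (i : Fin 8) : wordBasis i = word i :=
  Module.Basis.mk_apply _ _ i

end Basis

section HochschildHomology

/-- The coordinates, in the basis `1, Sq¹, Sq², Sq¹Sq², Sq¹Sq²Sq¹Sq²` of the zeroth Hochschild
homology, of the class of each word. -/
def wordClass : Fin 8 → Fin 5 → ZMod 2 :=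
  ![Pi.single 0 1, Pi.single 1 1, Pi.single 2 1, Pi.single 3 1, Pi.single 3 1, 0, 0, Pi.single 4 1]

/-- The projection of `A(1)` onto its zeroth Hochschild homology, in the coordinates of
`wordClass`. -/
noncomputable def universalTrace : A1 →ₗ[ZMod 2] Fin 5 → ZMod 2 :=
  wordBasis.constr (ZMod 2) wordClass

theorem universalTrace_word (i : Fin 8) : universalTrace (word i) = wordClass i := by
  rw [← wordBasis_apply, universalTrace, Module.Basis.constr_basis]

theorem universalTrace_mul_comm (x y : A1) :
    universalTrace (x * y) = universalTrace (y * x) := by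
  refine map_mul_comm_of_adjoin_eq_top universalTrace adjoin_Sq1_Sq2 span_range_word ?_ x y
  rintro _ (rfl | rfl) _ ⟨i, rfl⟩
  · rw [Sq1_mul_word, word_mul_Sq1]
    fin_cases i <;> simp [universalTrace_word, wordClass]
  · rw [Sq2_mul_word, word_mul_Sq2]
    fin_cases i <;> simp [universalTrace_word, wordClass]

/-- The linear map sending the standard basis to the classes of
`1, Sq¹, Sq², Sq¹Sq², Sq¹Sq²Sq¹Sq²` in the zeroth Hochschild homology. -/
noncomputable def classMap : (Fin 5 → ZMod 2) →ₗ[ZMod 2] A1 ⧸ commutatorSpan (ZMod 2) A1 :=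
  (Pi.basisFun (ZMod 2) (Fin 5)).constr (ZMod 2)
    ((commutatorSpan (ZMod 2) A1).mkQ ∘ word ∘ ![0, 1, 2, 3, 7])

theorem classMap_single (j : Fin 5) : classMap (Pi.single j 1) =
    (commutatorSpan (ZMod 2) A1).mkQ (word (![0, 1, 2, 3, 7] j)) := by
  rw [← Pi.basisFun_apply, classMap, Module.Basis.constr_basis]
  rfl

theorem classMap_wordClass (i : Fin 8) :
    classMap (wordClass i) = (commutatorSpan (ZMod 2) A1).mkQ (word i) := by
  have class_Sq2_Sq1 : (commutatorSpan (ZMod 2) A1).mkQ (word 4) =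
      (commutatorSpan (ZMod 2) A1).mkQ (word 3) :=
    commutatorSpan_mkQ_mul_comm (ZMod 2) Sq2 Sq1
  have class_Sq1_Sq2_Sq1 : (commutatorSpan (ZMod 2) A1).mkQ (word 5) = 0 := by
    rw [show word 5 = Sq1 * word 4 from rfl, commutatorSpan_mkQ_mul_comm, word_mul_Sq1]
    exact map_zero _
  have class_Sq2_Sq1_Sq2 : (commutatorSpan (ZMod 2) A1).mkQ (word 6) = 0 := by
    rw [show word 6 = Sq2 * word 3 from rfl, commutatorSpan_mkQ_mul_comm, word_mul_Sq2]
    exact map_zero _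
  fin_cases i <;>
    simp [-Submodule.mkQ_apply, wordClass, classMap_single, class_Sq2_Sq1, class_Sq1_Sq2_Sq1,
      class_Sq2_Sq1_Sq2]

/-- The coordinates on the zeroth Hochschild homology of `A(1)` induced by `universalTrace`. -/
noncomputable def hochschildZeroEquiv :
    (A1 ⧸ commutatorSpan (ZMod 2) A1) ≃ₗ[ZMod 2] Fin 5 → ZMod 2 :=
  LinearEquiv.ofLinearMap
    ((commutatorSpan (ZMod 2) A1).liftQ universalTrace
      (commutatorSpan_le_ker universalTrace_mul_comm))
    classMap
    (by
      refine (Pi.basisFun (ZMod 2) (Fin 5)).ext fun j => ?_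
      fin_cases j <;> simp [classMap_single, universalTrace_word, wordClass])
    (by
      refine Submodule.linearMap_qext _ (wordBasis.ext fun i => ?_)
      simpa [wordBasis_apply, universalTrace_word] using classMap_wordClass i)

end HochschildHomology

end A1

/-- The zeroth Hochschild homology of `A(1)`, i.e. the quotient of `A(1)` by the `F₂`-linear
span of all commutators `x*y - y*x`, is an `F₂`-vector space of dimension 5. -/
theorem hochschildHomology_A1_zero_dim :
    Module.finrank (ZMod 2)
      (A1 ⧸ Submodule.span (ZMod 2) {x : A1 | ∃ a b : A1, x = a * b - b * a}) = 5 :=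
  A1.hochschildZeroEquiv.finrank_eq.trans (Module.finrank_fin_fun _)
end
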